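/- arXiv:2601.07804 — 3 statements merged into one kernel-verified Lean document; each statement's English description precedes it below -/
import Mathlib

section
/- Let a contractive local IFS on a compact metric space X have code space Σ and code map π (so π(b) is the unique point of ⋂_{k≥1} V_b(k) for b ∈ Σ). If b ∈ Σ and 1 ≤ j ≤ n is such that π(b) ∈ X_j, then the concatenation b∗j belongs to Σ and π(b∗j) = f_j(π(b)). -/
/-- The cylinder sets of a local IFS: `cylinder f Xs k b` is the set
`V_b(k+1)` of the left-infinite word encoded by `b : ℕ → Fin n`. -/
def cylinder {X : Type*} {n : ℕ} (f : Fin n → X → X) (Xs : Fin n → Set X) :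
    ℕ → (ℕ → Fin n) → Set X
  | 0, b => f (b 0) '' Xs (b 0)
  | k + 1, b => f (b 0) '' (cylinder f Xs k (fun j => b (j + 1)) ∩ Xs (b 0))

/-- The code space of a local IFS: the set of left-infinite words all of whose
cylinder sets are nonempty. -/
def codeSpace {X : Type*} {n : ℕ} (f : Fin n → X → X) (Xs : Fin n → Set X) :
    Set (ℕ → Fin n) :=
  {b | ∀ k : ℕ, (cylinder f Xs k b).Nonempty}

/-- Concatenation `b ∗ j` of a left-infinite word `b` with a symbol `j`:
`(b∗j)(0) = j` and `(b∗j)(k+1) = b k`. -/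
def concat {n : ℕ} (b : ℕ → Fin n) (j : Fin n) : ℕ → Fin n
  | 0 => j
  | k + 1 => b k

/-- Two points of the same cylinder of order `k + 1` are at distance at most
`L ^ (k + 1) * diam X`, when every map of the local IFS contracts by the factor `L`. -/
theorem dist_le_of_mem_cylinder {X : Type*} [MetricSpace X] [CompactSpace X] {n : ℕ}
    {f : Fin n → X → X} {Xs : Fin n → Set X} {L : ℝ} (hL : 0 ≤ L)
    (hcontr : ∀ j, ∀ x ∈ Xs j, ∀ y ∈ Xs j, dist (f j x) (f j y) ≤ L * dist x y)
    (k : ℕ) (b : ℕ → Fin n) {x y : X}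
    (hx : x ∈ cylinder f Xs k b) (hy : y ∈ cylinder f Xs k b) :
    dist x y ≤ L ^ (k + 1) * Metric.diam (Set.univ : Set X) := by
  induction k generalizing b x y with
  | zero =>
    obtain ⟨u, hu, rfl⟩ := hx
    obtain ⟨v, hv, rfl⟩ := hy
    rw [zero_add, pow_one]
    exact (hcontr _ u hu v hv).trans (mul_le_mul_of_nonneg_left
      (Metric.dist_le_diam_of_mem isCompact_univ.isBounded trivial trivial) hL)
  | succ k ih =>
    obtain ⟨u, ⟨hu, hu'⟩, rfl⟩ := hx
    obtain ⟨v, ⟨hv, hv'⟩, rfl⟩ := hy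
    rw [pow_succ', mul_assoc]
    exact (hcontr _ u hu' v hv').trans (mul_le_mul_of_nonneg_left (ih _ hu hv) hL)

/-- Two points lying in all cylinders of a word coincide if the maps of the local IFS
contract by a common factor `L < 1`. -/
theorem eq_of_forall_mem_cylinder {X : Type*} [MetricSpace X] [CompactSpace X] {n : ℕ}
    {f : Fin n → X → X} {Xs : Fin n → Set X} {L : ℝ} (hL : 0 ≤ L) (hL1 : L < 1)
    (hcontr : ∀ j, ∀ x ∈ Xs j, ∀ y ∈ Xs j, dist (f j x) (f j y) ≤ L * dist x y)
    {b : ℕ → Fin n} {x y : X}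
    (hx : ∀ k, x ∈ cylinder f Xs k b) (hy : ∀ k, y ∈ cylinder f Xs k b) : x = y := by
  have hlim := (((tendsto_pow_atTop_nhds_zero_of_lt_one hL hL1).comp
    (Filter.tendsto_add_atTop_nat 1)).mul_const (Metric.diam (Set.univ : Set X)))
  rw [zero_mul] at hlim
  exact dist_le_zero.mp (ge_of_tendsto' hlim fun k =>
    dist_le_of_mem_cylinder hL hcontr k b (hx k) (hy k))

/-- If `x ∈ X_j` lies in all cylinders of `b`, then `f j x` lies in all cylinders of `b ∗ j`. -/
theorem apply_mem_cylinder_concat {X : Type*} {n : ℕ} {f : Fin n → X → X}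
    {Xs : Fin n → Set X} {b : ℕ → Fin n} {j : Fin n} {x : X} (hj : x ∈ Xs j)
    (hx : ∀ k, x ∈ cylinder f Xs k b) (k : ℕ) : f j x ∈ cylinder f Xs k (concat b j) := by
  cases k with
  | zero => exact ⟨x, hj, rfl⟩
  | succ k => exact ⟨x, ⟨hx k, hj⟩, rfl⟩

/-- For a contractive local IFS with code map `π` (so `π b` is the
unique point of `⋂_{k ≥ 1} V_b(k)` for `b` in the code space), if `b` is in the code
space and `π b ∈ X_j`, then `b ∗ j` is in the code space and `π (b ∗ j) = f j (π b)`. -/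
theorem concat_mem_codeSpace_and_codeMap {X : Type*} [MetricSpace X] [CompactSpace X]
    {n : ℕ} (hn : 0 < n)
    (Xs : Fin n → Set X) (hXs : ∀ j, IsClosed (Xs j))
    (f : Fin n → X → X)
    (lam : Fin n → ℝ) (hlam0 : ∀ j, 0 ≤ lam j) (hlam1 : ∀ j, lam j < 1)
    (hcontr : ∀ j, ∀ x ∈ Xs j, ∀ y ∈ Xs j, dist (f j x) (f j y) ≤ lam j * dist x y)
    (π : (ℕ → Fin n) → X)
    (hπ : ∀ b ∈ codeSpace f Xs, ∀ k : ℕ, π b ∈ cylinder f Xs k b)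
    (b : ℕ → Fin n) (hb : b ∈ codeSpace f Xs) (j : Fin n) (hj : π b ∈ Xs j) :
    concat b j ∈ codeSpace f Xs ∧ π (concat b j) = f j (π b) := by
  have hmem := apply_mem_cylinder_concat hj (hπ b hb)
  have hconcat : concat b j ∈ codeSpace f Xs := fun k => ⟨_, hmem k⟩
  have : Nonempty (Fin n) := ⟨⟨0, hn⟩⟩
  obtain ⟨m, hm⟩ := Finite.exists_max lam
  exact ⟨hconcat, eq_of_forall_mem_cylinder (hlam0 m) (hlam1 m)
    (fun i x hx y hy => (hcontr i x hx y hy).trans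
      (mul_le_mul_of_nonneg_right (hm i) dist_nonneg)) (hπ _ hconcat) hmem⟩
end

section
/- Let a contractive local IFS on a compact metric space X have local attractor A := ⋃{B ⊆ X : F(B) = B} with A ≠ ∅, code space Σ and code map π. Then π(Σ) = A; that is, A = {x ∈ X : there exists b ∈ Σ with x ∈ V_b(k) for all k ≥ 1}. -/
theorem cylinder_succ_subset {X : Type*} {n : ℕ} (f : Fin n → X → X) (Xs : Fin n → Set X)
    (k : ℕ) (b : ℕ → Fin n) : cylinder f Xs (k + 1) b ⊆ cylinder f Xs k b := by
  induction k generalizing b with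
  | zero => exact Set.image_mono Set.inter_subset_right
  | succ k ih => exact Set.image_mono (Set.inter_subset_inter_left _ (ih _))

theorem isCompact_cylinder {X : Type*} [TopologicalSpace X] [CompactSpace X] [T2Space X] {n : ℕ}
    {f : Fin n → X → X} {Xs : Fin n → Set X} (hXs : ∀ j, IsClosed (Xs j))
    (hf : ∀ j, ContinuousOn (f j) (Xs j)) (k : ℕ) (b : ℕ → Fin n) :
    IsCompact (cylinder f Xs k b) := by
  induction k generalizing b with
  | zero => exact (hXs _).isCompact.image_of_continuousOn (hf _)
  | succ k ih =>
    exact ((ih _).inter_right (hXs _)).image_of_continuousOn ((hf _).mono Set.inter_subset_right)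

/-- A point of all cylinders of `b` has a preimage under `f (b 0)` in all cylinders of the
shifted word. -/
theorem exists_preimage_mem_cylinder_shift {X : Type*} [TopologicalSpace X] [CompactSpace X]
    [T2Space X] {n : ℕ} {f : Fin n → X → X} {Xs : Fin n → Set X} (hXs : ∀ j, IsClosed (Xs j))
    (hf : ∀ j, ContinuousOn (f j) (Xs j)) {b : ℕ → Fin n} {x : X}
    (hx : ∀ k, x ∈ cylinder f Xs k b) :
    ∃ y ∈ Xs (b 0), f (b 0) y = x ∧ ∀ k, y ∈ cylinder f Xs k (fun j => b (j + 1)) := by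
  have hfib : IsClosed (Xs (b 0) ∩ f (b 0) ⁻¹' {x}) :=
    (hf _).preimage_isClosed_of_isClosed (hXs _) isClosed_singleton
  have hclosed : ∀ k, IsClosed
      (cylinder f Xs k (fun j => b (j + 1)) ∩ (Xs (b 0) ∩ f (b 0) ⁻¹' {x})) :=
    fun k => (isCompact_cylinder hXs hf k _).isClosed.inter hfib
  obtain ⟨y, hy⟩ := IsCompact.nonempty_iInter_of_sequence_nonempty_isCompact_isClosed _
    (fun k => Set.inter_subset_inter_left _ (cylinder_succ_subset f Xs k _))
    (fun k => by
      obtain ⟨y, ⟨hyV, hyX⟩, hyx⟩ := hx (k + 1)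
      exact ⟨y, hyV, hyX, hyx⟩)
    (hclosed 0).isCompact hclosed
  rw [Set.mem_iInter] at hy
  exact ⟨y, (hy 0).2.1, (hy 0).2.2, fun k => (hy k).1⟩

/-- Every point of a set contained in its image under the local Hutchinson–Barnsley operator
lies in all cylinders of some word. -/
theorem exists_forall_mem_cylinder {X : Type*} {n : ℕ} {f : Fin n → X → X} {Xs : Fin n → Set X}
    {B : Set X} (hB : B ⊆ ⋃ j, f j '' (B ∩ Xs j)) {x : X} (hx : x ∈ B) :
    ∃ b : ℕ → Fin n, ∀ k, x ∈ cylinder f Xs k b := by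
  have hpre : ∀ z : B, ∃ (j : Fin n) (y : B), (y : X) ∈ Xs j ∧ f j y = z := by
    intro z
    obtain ⟨j, y, ⟨hyB, hyX⟩, hyz⟩ := Set.mem_iUnion.1 (hB z.2)
    exact ⟨j, ⟨y, hyB⟩, hyX, hyz⟩
  choose c g hgX hfg using hpre
  have hmem : ∀ (k : ℕ) (z : B), (z : X) ∈ cylinder f Xs k (fun m => c (g^[m] z)) := by
    intro k
    induction k with
    | zero => exact fun z => ⟨g z, hgX z, hfg z⟩
    | succ k ih => exact fun z => ⟨g z, ⟨ih (g z), hgX z⟩, hfg z⟩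
  exact ⟨_, fun k => hmem k ⟨x, hx⟩⟩

/-- For a contractive local IFS with nonempty local attractor
`A = ⋃ {B : F B = B}`, the image of the code space under the code map equals `A`:
`A = {x : ∃ b ∈ Σ with x ∈ V_b(k) for all k ≥ 1}`. -/
theorem attractor_eq_image_codeSpace {X : Type*} [MetricSpace X] [CompactSpace X]
    {n : ℕ} (hn : 0 < n)
    (Xs : Fin n → Set X) (hXs : ∀ j, IsClosed (Xs j))
    (f : Fin n → X → X)
    (lam : Fin n → ℝ) (hlam0 : ∀ j, 0 ≤ lam j) (hlam1 : ∀ j, lam j < 1)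
    (hcontr : ∀ j, ∀ x ∈ Xs j, ∀ y ∈ Xs j, dist (f j x) (f j y) ≤ lam j * dist x y)
    (F : Set X → Set X) (hF : ∀ B, F B = ⋃ j, f j '' (B ∩ Xs j))
    (A : Set X) (hA : A = ⋃₀ {B : Set X | F B = B}) (hAne : A.Nonempty) :
    A = {x : X | ∃ b ∈ codeSpace f Xs, ∀ k : ℕ, x ∈ cylinder f Xs k b} := by
  have hf : ∀ j, ContinuousOn (f j) (Xs j) := fun j =>
    (LipschitzOnWith.of_dist_le_mul (K := ⟨lam j, hlam0 j⟩) (hcontr j)).continuousOn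
  subst hA
  apply Set.Subset.antisymm
  · rintro x ⟨B, hB, hxB⟩
    obtain ⟨b, hb⟩ := exists_forall_mem_cylinder (((hF B).symm.trans hB).ge) hxB
    exact ⟨b, fun k => ⟨x, hb k⟩, hb⟩
  · refine Set.subset_sUnion_of_mem ?_
    rw [Set.mem_ofPred_eq, hF]
    apply Set.Subset.antisymm
    · refine Set.iUnion_subset fun j => ?_
      rintro _ ⟨y, ⟨⟨b, -, hy⟩, hyX⟩, rfl⟩
      have hmem : ∀ k, f j y ∈ cylinder f Xs k (fun m => Nat.casesOn m j b) := by
        rintro (_ | k)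
        · exact ⟨y, hyX, rfl⟩
        · exact ⟨y, ⟨hy k, hyX⟩, rfl⟩
      exact ⟨_, fun k => ⟨_, hmem k⟩, hmem⟩
    · rintro x ⟨b, -, hx⟩
      obtain ⟨y, hyX, hyx, hy⟩ := exists_preimage_mem_cylinder_shift hXs hf hx
      exact Set.mem_iUnion.2 ⟨b 0, y, ⟨⟨_, fun k => ⟨y, hy k⟩, hy⟩, hyX⟩, hyx⟩
end

section
/- Let X be a compact metric space, f_1, …, f_n : X → X contractions, A_R a nonempty compact set with ⋃_{j=1}^n f_j(A_R) = A_R, and let F be the local Hutchinson–Barnsley operator of the local IFS obtained by restricting each f_j to a closed set X_j ⊆ X, with local attractor A. If A ≠ ∅, then A = ⋂_{k ≥ 0} F^k(A_R), and hausdorffDist(F^k(A_R), A) → 0 as k → ∞. -/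
open Filter

/-- A decreasing sequence of compact sets converges to its intersection in the Hausdorff distance. -/
theorem tendsto_hausdorffDist_iInter_of_antitone {X : Type*} [MetricSpace X] {K : ℕ → Set X}
    (hK : Antitone K) (hKc : ∀ k, IsCompact (K k)) :
    Tendsto (fun k => Metric.hausdorffDist (K k) (⋂ k, K k)) atTop (nhds 0) := by
  rw [Metric.tendsto_atTop]
  intro ε hε
  obtain ⟨N, hN⟩ := exists_subset_nhds_of_isCompact hK.directed_ge hKc
    (U := Metric.thickening (ε / 2) (⋂ k, K k))
    fun x hx => Metric.isOpen_thickening.mem_nhds (Metric.self_subset_thickening (half_pos hε) _ hx)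
  refine ⟨N, fun k hk => ?_⟩
  rw [Real.dist_0_eq_abs, abs_of_nonneg Metric.hausdorffDist_nonneg]
  refine lt_of_le_of_lt ?_ (half_lt_self hε)
  refine Metric.hausdorffDist_le_of_mem_dist (half_pos hε).le (fun x hx => ?_) fun x hx => ?_
  · obtain ⟨y, hy, hxy⟩ := Metric.mem_thickening_iff.1 (hN (hK hk hx))
    exact ⟨y, hy, hxy.le⟩
  · exact ⟨x, Set.mem_iInter.1 hx k, by simpa using (half_pos hε).le⟩

/-- A bounded set covered by its own images under finitely many contractions lies in every
nonempty closed set that these contractions map into itself. -/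
theorem subset_of_subset_iUnion_image_of_contracting {X ι : Type*} [MetricSpace X] [Finite ι]
    {f : ι → X → X} {lam : ι → ℝ} (hlam0 : ∀ j, 0 ≤ lam j) (hlam1 : ∀ j, lam j < 1)
    (hcontr : ∀ j, ∀ x y : X, dist (f j x) (f j y) ≤ lam j * dist x y)
    {C B : Set X} (hCne : C.Nonempty) (hC : IsClosed C) (hfC : ∀ j, Set.MapsTo (f j) C C)
    (hBb : Bornology.IsBounded B) (hB : B ⊆ ⋃ j, f j '' B) : B ⊆ C := by
  rcases B.eq_empty_or_nonempty with rfl | ⟨b, hb⟩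
  · exact Set.empty_subset _
  obtain ⟨j₀, -⟩ := Set.mem_iUnion.1 (hB hb)
  have : Nonempty ι := ⟨j₀⟩
  obtain ⟨m, hm⟩ := Finite.exists_max lam
  obtain ⟨c, hc⟩ := hCne
  obtain ⟨D, hD⟩ := hBb.subset_closedBall c
  have bound : ∀ k : ℕ, ∀ x ∈ B, ∃ y ∈ C, dist x y ≤ lam m ^ k * D := by
    intro k
    induction k with
    | zero => exact fun x hx => ⟨c, hc, by simpa using hD hx⟩
    | succ k ih =>
      intro x hx
      obtain ⟨j, z, hz, rfl⟩ := Set.mem_iUnion.1 (hB hx)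
      obtain ⟨y, hy, hzy⟩ := ih z hz
      refine ⟨f j y, hfC j hy, ?_⟩
      calc dist (f j z) (f j y) ≤ lam j * dist z y := hcontr j z y
        _ ≤ lam m * (lam m ^ k * D) :=
          mul_le_mul (hm j) hzy dist_nonneg (hlam0 m)
        _ = lam m ^ (k + 1) * D := by ring
  intro x hx
  rw [← hC.closure_eq, Metric.mem_closure_iff]
  intro ε hε
  have hlim : Tendsto (fun k : ℕ => lam m ^ k * D) atTop (nhds 0) := by
    simpa using (tendsto_pow_atTop_nhds_zero_of_lt_one (hlam0 m) (hlam1 m)).mul_const D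
  obtain ⟨k, hk⟩ := (hlim.eventually (gt_mem_nhds hε)).exists
  obtain ⟨y, hy, hxy⟩ := bound k x hx
  exact ⟨y, hy, hxy.trans_lt hk⟩

/-- If finitely many continuous maps, restricted to closed sets, send each member of a decreasing
sequence of compact sets onto the next, then they send its intersection onto itself. -/
theorem iUnion_image_iInter_inter_eq_of_antitone {X ι : Type*} [TopologicalSpace X] [T2Space X]
    [Finite ι] {f : ι → X → X} (hf : ∀ j, Continuous (f j)) {Xs : ι → Set X}
    (hXs : ∀ j, IsClosed (Xs j)) {K : ℕ → Set X} (hK : Antitone K) (hKc : ∀ k, IsCompact (K k))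
    (hsucc : ∀ k, K (k + 1) = ⋃ j, f j '' (K k ∩ Xs j)) :
    ⋃ j, f j '' ((⋂ k, K k) ∩ Xs j) = ⋂ k, K k := by
  apply Set.Subset.antisymm
  · refine Set.subset_iInter fun k => Set.Subset.trans ?_ (hK k.le_succ)
    rw [Nat.succ_eq_add_one, hsucc]
    exact Set.iUnion_mono fun j =>
      Set.image_mono (Set.inter_subset_inter_left _ (Set.iInter_subset _ k))
  · intro x hx
    have hclosed : IsClosed (⋃ j, Xs j ∩ f j ⁻¹' {x}) :=
      isClosed_iUnion_of_finite fun j => (hXs j).inter (isClosed_singleton.preimage (hf j))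
    obtain ⟨y, hy⟩ := IsCompact.nonempty_iInter_of_sequence_nonempty_isCompact_isClosed
      (fun k => K k ∩ ⋃ j, Xs j ∩ f j ⁻¹' {x})
      (fun k => Set.inter_subset_inter_left _ (hK k.le_succ))
      (fun k => by
        have hxk := Set.mem_iInter.1 hx (k + 1)
        rw [hsucc] at hxk
        obtain ⟨j, z, ⟨hzK, hzX⟩, hzx⟩ := Set.mem_iUnion.1 hxk
        exact ⟨z, hzK, Set.mem_iUnion.2 ⟨j, hzX, hzx⟩⟩)
      ((hKc 0).inter_right hclosed)
      (fun k => (hKc k).isClosed.inter hclosed)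
    rw [Set.mem_iInter] at hy
    obtain ⟨j, hyX, hyx⟩ := Set.mem_iUnion.1 (hy 0).2
    exact Set.mem_iUnion.2 ⟨j, y, ⟨Set.mem_iInter.2 fun k => (hy k).1, hyX⟩, hyx⟩

/-- Let `A_R` be a nonempty compact set invariant under a global
contractive IFS `(f j)` on a compact metric space, and let `F` be the local
Hutchinson–Barnsley operator of the local IFS obtained by restricting each `f j`
to a closed set `X_j`, with local attractor `A`. If `A ≠ ∅`, then
`A = ⋂ k, F^[k] A_R` and `hausdorffDist (F^[k] A_R) A → 0`. -/
theorem attractor_eq_iInter_iterates_global {X : Type*} [MetricSpace X] [CompactSpace X]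
    {n : ℕ} (hn : 0 < n)
    (f : Fin n → X → X)
    (lam : Fin n → ℝ) (hlam0 : ∀ j, 0 ≤ lam j) (hlam1 : ∀ j, lam j < 1)
    (hcontr : ∀ j, ∀ x y : X, dist (f j x) (f j y) ≤ lam j * dist x y)
    (AR : Set X) (hARne : AR.Nonempty) (hARc : IsCompact AR)
    (hAR : ⋃ j, f j '' AR = AR)
    (Xs : Fin n → Set X) (hXs : ∀ j, IsClosed (Xs j))
    (F : Set X → Set X) (hF : ∀ B, F B = ⋃ j, f j '' (B ∩ Xs j))
    (A : Set X) (hA : A = ⋃₀ {B : Set X | F B = B}) (hAne : A.Nonempty) :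
    A = (⋂ k : ℕ, F^[k] AR) ∧
      Tendsto (fun k : ℕ => Metric.hausdorffDist (F^[k] AR) A) atTop (nhds 0) := by
  have hcont : ∀ j, Continuous (f j) := fun j =>
    (LipschitzWith.of_dist_le_mul (K := ⟨lam j, hlam0 j⟩) (hcontr j)).continuous
  have hmono : Monotone F := fun B C hBC => by
    rw [hF, hF]
    exact Set.iUnion_mono fun j => Set.image_mono (Set.inter_subset_inter_left _ hBC)
  have hle : ∀ B, F B ⊆ ⋃ j, f j '' B := fun B => by
    rw [hF]
    exact Set.iUnion_mono fun j => Set.image_mono Set.inter_subset_left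
  have hanti : Antitone fun k : ℕ => F^[k] AR :=
    hmono.antitone_iterate_of_map_le ((hle AR).trans hAR.le)
  have hcompact : ∀ k : ℕ, IsCompact (F^[k] AR) := by
    intro k
    induction k with
    | zero => exact hARc
    | succ k ih =>
      rw [Function.iterate_succ_apply', hF]
      exact isCompact_iUnion fun j => (ih.inter_right (hXs j)).image (hcont j)
  have hfix : F (⋂ k : ℕ, F^[k] AR) = ⋂ k : ℕ, F^[k] AR := by
    rw [hF]
    exact iUnion_image_iInter_inter_eq_of_antitone hcont hXs hanti hcompact fun k => by
      rw [Function.iterate_succ_apply', hF]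
  have hmaps : ∀ j, Set.MapsTo (f j) AR AR := fun j x hx =>
    hAR.le (Set.mem_iUnion.2 ⟨j, x, hx, rfl⟩)
  have hAeq : A = ⋂ k : ℕ, F^[k] AR := by
    rw [hA]
    refine Set.Subset.antisymm (Set.sUnion_subset fun B hB => ?_) (Set.subset_sUnion_of_mem hfix)
    have hB : F B = B := hB
    have hBAR : B ⊆ AR := subset_of_subset_iUnion_image_of_contracting hlam0 hlam1 hcontr hARne
      hARc.isClosed hmaps Metric.isBounded_of_compactSpace (hB.ge.trans (hle B))
    refine Set.subset_iInter fun k => ?_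
    rw [← Function.iterate_fixed hB k]
    exact hmono.iterate k hBAR
  refine ⟨hAeq, ?_⟩
  rw [hAeq]
  exact tendsto_hausdorffDist_iInter_of_antitone hanti hcompact
end
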